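/- A lattice effect algebra E = (E;⊕,',0,1) is a lattice orthoalgebra if and only if its corresponding effect groupoid ℝ(E) = (E;·,',0,1), where x·y := ((x'∧y)⊕y')', is idempotent, i.e., satisfies the identity x·x = x. -/

import Mathlib

/-- An effect algebra: a partial algebra (E;⊕,',0,1). The partial operation ⊕ is
modeled by a definedness predicate `D` together with a total function `add` whose
value is only meaningful on defined pairs. -/
structure EffectAlgebra (E : Type*) where
  /-- definedness of `x ⊕ y` -/
  D : E → E → Prop
  /-- the value of `x ⊕ y` (meaningful only when `D x y`) -/
  add : E → E → E
  zero : E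
  one : E
  /-- the complement `x'` -/
  compl : E → E
  /-- (E1) commutativity -/
  E1 : ∀ x y, D x y → D y x ∧ add x y = add y x
  /-- (E2) associativity -/
  E2 : ∀ x y z, D x y → D (add x y) z →
    D y z ∧ D x (add y z) ∧ add (add x y) z = add x (add y z)
  /-- (E3) existence of the complement -/
  E3a : ∀ x, D x (compl x)
  E3b : ∀ x, add x (compl x) = one
  /-- (E3) uniqueness of the complement -/
  E3c : ∀ x y, D x y → add x y = one → y = compl x
  /-- (E4) -/
  E4 : ∀ x, D x one → x = zero

/-- The induced order of an effect algebra: `a ≤ b` iff `a ⊕ c = b` for some `c`. -/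
def EffectAlgebra.le {E : Type*} (A : EffectAlgebra E) (a b : E) : Prop :=
  ∃ c, A.D a c ∧ A.add a c = b

/-- A lattice effect algebra: an effect algebra whose induced order is a lattice,
with meet `inf` and join `sup`. -/
structure LatticeEffectAlgebra (E : Type*) extends EffectAlgebra E where
  inf : E → E → E
  sup : E → E → E
  inf_le_left : ∀ a b, toEffectAlgebra.le (inf a b) a
  inf_le_right : ∀ a b, toEffectAlgebra.le (inf a b) b
  le_inf : ∀ a b c, toEffectAlgebra.le c a → toEffectAlgebra.le c b →
    toEffectAlgebra.le c (inf a b)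
  le_sup_left : ∀ a b, toEffectAlgebra.le a (sup a b)
  le_sup_right : ∀ a b, toEffectAlgebra.le b (sup a b)
  sup_le : ∀ a b c, toEffectAlgebra.le a c → toEffectAlgebra.le b c →
    toEffectAlgebra.le (sup a b) c

/-- The total operation `x·y := ((x'∧y)⊕y')'` on a lattice effect algebra
(well defined since `x'∧y ≤ y`). -/
def LatticeEffectAlgebra.prod {E : Type*} (A : LatticeEffectAlgebra E) (x y : E) : E :=
  A.compl (A.add (A.inf (A.compl x) y) (A.compl y))


namespace EffectAlgebra

variable {E : Type*} (A : EffectAlgebra E)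

theorem compl_compl (x : E) : A.compl (A.compl x) = x := by
  obtain ⟨hd, he⟩ := A.E1 _ _ (A.E3a x)
  exact (A.E3c _ _ hd (he ▸ A.E3b x)).symm

theorem compl_one : A.compl A.one = A.zero :=
  A.E4 _ (A.E1 _ _ (A.E3a A.one)).1

theorem one_D_zero : A.D A.one A.zero :=
  A.compl_one ▸ A.E3a A.one

theorem one_add_zero : A.add A.one A.zero = A.one := by
  have h := A.E3b A.one
  rwa [A.compl_one] at h

theorem zero_add (x : E) : A.D A.zero x ∧ A.add A.zero x = x := by
  obtain ⟨hd, he⟩ := A.E1 _ _ (A.E3a x)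
  have h1 : A.add (A.compl x) x = A.one := he ▸ A.E3b x
  obtain ⟨hx0, hd', h⟩ := A.E2 _ _ A.zero hd (h1 ▸ A.one_D_zero)
  rw [h1, A.one_add_zero] at h
  obtain ⟨h0x, hcomm⟩ := A.E1 _ _ hx0
  exact ⟨h0x, by rw [← hcomm, A.E3c _ _ hd' h.symm, A.compl_compl]⟩

/-- If `a ⊕ c` is defined then `c ⊕ (a ⊕ c)' = a'`. -/
theorem add_compl_add {a c : E} (h : A.D a c) :
    A.D c (A.compl (A.add a c)) ∧ A.add c (A.compl (A.add a c)) = A.compl a := by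
  obtain ⟨hd, hd', he⟩ := A.E2 _ _ _ h (A.E3a (A.add a c))
  exact ⟨hd, A.E3c _ _ hd' (he ▸ A.E3b _)⟩

theorem add_right_cancel {a b c : E} (ha : A.D a c) (hb : A.D b c)
    (h : A.add a c = A.add b c) : a = b := by
  have hc : A.compl a = A.compl b := by
    rw [← (A.add_compl_add ha).2, ← (A.add_compl_add hb).2, h]
  rw [← A.compl_compl a, hc, A.compl_compl]

theorem le_refl (a : E) : A.le a a := by
  obtain ⟨hd, he⟩ := A.E1 _ _ (A.zero_add a).1
  exact ⟨A.zero, hd, he ▸ (A.zero_add a).2⟩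

variable {A}

theorem le.D_left {a b z : E} (h : A.le a b) (hb : A.D b z) : A.D a z := by
  obtain ⟨c, hac, rfl⟩ := h
  obtain ⟨hca, he⟩ := A.E1 _ _ hac
  exact (A.E2 _ _ _ hca (he ▸ hb)).1

theorem le.eq_zero {a : E} (h : A.le a A.zero) : a = A.zero :=
  A.E4 _ (h.D_left (A.E1 _ _ A.one_D_zero).1)

theorem le_compl_of_D {a b : E} (h : A.D a b) : A.le b (A.compl a) :=
  ⟨_, A.add_compl_add h⟩

end EffectAlgebra

theorem LatticeEffectAlgebra.prod_self_eq_iff {E : Type*} (A : LatticeEffectAlgebra E) (x : E) :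
    A.prod x x = x ↔ A.inf (A.compl x) x = A.zero := by
  obtain ⟨hd0, he0⟩ := A.zero_add (A.compl x)
  unfold LatticeEffectAlgebra.prod
  constructor
  · intro h
    refine A.add_right_cancel ((A.inf_le_right _ _).D_left (A.E3a x)) hd0 ?_
    rw [he0, ← A.compl_compl (A.add _ _), h]
  · intro h
    rw [h, he0, A.compl_compl]

/-- A lattice effect algebra is a lattice orthoalgebra (i.e. `x⊕x` exists only for
`x = 0`) iff its effect groupoid `(E;·,',0,1)` with `x·y := ((x'∧y)⊕y')'` is
idempotent. -/
theorem orthoalgebra_iff_idempotent {E : Type*} (A : LatticeEffectAlgebra E) :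
    (∀ x, A.D x x → x = A.zero) ↔ (∀ x, A.prod x x = x) := by
  simp only [A.prod_self_eq_iff]
  constructor
  · intro h x
    have hx := (A.inf_le_right (A.compl x) x).D_left (A.E3a x)
    exact h _ ((A.inf_le_left _ _).D_left (A.E1 _ _ hx).1)
  · intro h x hx
    have hle := A.le_inf _ _ _ (EffectAlgebra.le_compl_of_D hx) (A.le_refl x)
    exact (h x ▸ hle).eq_zero
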